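/- arXiv:1510.02587 — 6 statements merged into one kernel-verified Lean document; each statement's English description precedes it below -/
import Mathlib

section
/- Let E', M, M', E be categories, and let Ψ : E' → M, Ψ' : E' → M', U : M → E, U' : M' → E be functors such that U ∘ Ψ = U' ∘ Ψ'. Assume U and U' are conservative (reflect isomorphisms), and that Ψ and Ψ' admit fully faithful left adjoints Φ ⊣ Ψ and Φ' ⊣ Ψ' (with counits ε, ε' and invertible units η : id_M ≅ ΨΦ and η' : id_{M'} ≅ Ψ'Φ'). Then the pair (Ψ'Φ : M → M', ΨΦ' : M' → M) forms an adjoint equivalence of categories, whose unit η̂ is determined by η̂⁻¹ = η⁻¹ ∘ (Ψ ε' Φ) : ΨΦ'Ψ'Φ → id_M and whose counit is ε̂ = (η')⁻¹ ∘ (Ψ' ε Φ') : Ψ'ΦΨΦ' → id_{M'}; in particular these two natural transformations satisfy the triangle identities and are both isomorphisms. -/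
/-!
By a triangle identity, `Ψ'ε'` is inverse to the invertible `η'Ψ'`. Since `UΨ = U'Ψ'`, it follows
that `UΨε'` is invertible, hence so is `Ψε'` because `U` is conservative; symmetrically `Ψ'ε` is
invertible. So both comparison maps `η⁻¹ ∘ Ψε'Φ` and `η'⁻¹ ∘ Ψ'εΦ'` are invertible.

Once the unit is inverted, each triangle identity equates one comparison map, after applying the
composite functor, with the other comparison map at the image of that functor. Using
`η⁻¹Ψ = Ψε` and `Φη⁻¹ = εΦ` (and their primed versions), both sides become the image of the two
sides of the interchange law for the counits `ε` and `ε'`. The two triangle identities are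
exchanged by swapping the primed and unprimed data, so `map_comparison` covers both.
-/

open CategoryTheory

namespace BergerLemma

section Unit

variable {C D : Type*} [Category C] [Category D] {L : C ⥤ D} {R : D ⥤ C} (adj : L ⊣ R)
  [IsIso adj.unit]

lemma inv_unit_app_right (Z : D) : (inv adj.unit).app (R.obj Z) = R.map (adj.counit.app Z) := by
  rw [NatIso.isIso_inv_app, IsIso.inv_eq_of_hom_inv_id]
  exact adj.right_triangle_components Z

lemma map_inv_unit_app (X : C) : L.map ((inv adj.unit).app X) = adj.counit.app (L.obj X) := by
  rw [NatIso.isIso_inv_app, Functor.map_inv, IsIso.inv_eq_of_hom_inv_id]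
  exact adj.left_triangle_components X

lemma isIso_map_counit_app (Z : D) : IsIso (R.map (adj.counit.app Z)) := by
  rw [← inv_unit_app_right]
  infer_instance

end Unit

variable {E' M M' E : Type*} [Category E'] [Category M] [Category M'] [Category E]

/-- If `UΨ = U'Ψ'` with `U` conservative, then `Ψ` inverts every morphism inverted by `Ψ'`. -/
lemma isIso_map_of_comp_eq {Ψ : E' ⥤ M} {Ψ' : E' ⥤ M'} {U : M ⥤ E} {U' : M' ⥤ E}
    (hcomm : Ψ ⋙ U = Ψ' ⋙ U')
    [U.ReflectsIsomorphisms] {A B : E'} (f : A ⟶ B) (hf : IsIso (Ψ'.map f)) :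
    IsIso (Ψ.map f) := by
  have h : IsIso ((Ψ' ⋙ U').map f) := by
    rw [Functor.comp_map]
    infer_instance
  have h' : IsIso (U.map (Ψ.map f)) := by
    rw [← hcomm] at h
    exact h
  exact isIso_of_reflects_iso (Ψ.map f) U

/-- The functor `Ψ'Φ` sends the comparison map `η⁻¹ ∘ Ψε'Φ` at `X` to the comparison map
`η'⁻¹ ∘ Ψ'εΦ'` at `Ψ'ΦX`. This is a triangle identity with the unit inverted. -/
lemma map_comparison {Ψ : E' ⥤ M} {Ψ' : E' ⥤ M'} {Φ : M ⥤ E'} {Φ' : M' ⥤ E'}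
    (adj : Φ ⊣ Ψ) (adj' : Φ' ⊣ Ψ')
    [IsIso adj.unit] [IsIso adj'.unit] (X : M) :
    Ψ'.map (Φ.map (Ψ.map (adj'.counit.app (Φ.obj X)) ≫ (inv adj.unit).app X)) =
      Ψ'.map (adj.counit.app (Φ'.obj (Ψ'.obj (Φ.obj X)))) ≫
        (inv adj'.unit).app (Ψ'.obj (Φ.obj X)) := by
  rw [inv_unit_app_right, Functor.map_comp, map_inv_unit_app, ← Functor.map_comp]
  exact congrArg Ψ'.map (adj.counit.naturality (adj'.counit.app (Φ.obj X)))

end BergerLemma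

/-- Berger's lemma: given functors `Ψ : E' ⥤ M`, `Ψ' : E' ⥤ M'` with `U ∘ Ψ = U' ∘ Ψ'`,
`U, U'` conservative, and fully faithful left adjoints `Φ ⊣ Ψ`, `Φ' ⊣ Ψ'` (units invertible),
the pair `(Ψ'Φ, ΨΦ')` is an adjoint equivalence with the stated unit and counit. -/
theorem stmt0 {E' M M' E : Type*} [Category E'] [Category M] [Category M'] [Category E]
    (Ψ : E' ⥤ M) (Ψ' : E' ⥤ M') (U : M ⥤ E) (U' : M' ⥤ E)
    (hcomm : Ψ ⋙ U = Ψ' ⋙ U')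
    [U.ReflectsIsomorphisms] [U'.ReflectsIsomorphisms]
    (Φ : M ⥤ E') (Φ' : M' ⥤ E') (adj : Φ ⊣ Ψ) (adj' : Φ' ⊣ Ψ')
    [IsIso adj.unit] [IsIso adj'.unit]
    (ηhatInv : (Φ ⋙ Ψ') ⋙ (Φ' ⋙ Ψ) ⟶ 𝟭 M)
    (hηhatInv : ∀ X : M,
      ηhatInv.app X = Ψ.map (adj'.counit.app (Φ.obj X)) ≫ (inv adj.unit).app X)
    (εhat : (Φ' ⋙ Ψ) ⋙ (Φ ⋙ Ψ') ⟶ 𝟭 M')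
    (hεhat : ∀ Y : M',
      εhat.app Y = Ψ'.map (adj.counit.app (Φ'.obj Y)) ≫ (inv adj'.unit).app Y) :
    ∃ ηhat : 𝟭 M ⟶ (Φ ⋙ Ψ') ⋙ (Φ' ⋙ Ψ),
      ηhat ≫ ηhatInv = 𝟙 (𝟭 M) ∧
      ηhatInv ≫ ηhat = 𝟙 ((Φ ⋙ Ψ') ⋙ (Φ' ⋙ Ψ)) ∧
      IsIso εhat ∧
      (∀ X : M, (Φ ⋙ Ψ').map (ηhat.app X) ≫ εhat.app ((Φ ⋙ Ψ').obj X)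
          = 𝟙 ((Φ ⋙ Ψ').obj X)) ∧
      (∀ Y : M', ηhat.app ((Φ' ⋙ Ψ).obj Y) ≫ (Φ' ⋙ Ψ).map (εhat.app Y)
          = 𝟙 ((Φ' ⋙ Ψ).obj Y)) := by
  have hη : IsIso ηhatInv := by
    have (X : M) : IsIso (ηhatInv.app X) := by
      have := BergerLemma.isIso_map_of_comp_eq hcomm (adj'.counit.app (Φ.obj X))
        (BergerLemma.isIso_map_counit_app adj' _)
      rw [hηhatInv]
      exact IsIso.comp_isIso
    exact NatIso.isIso_of_isIso_app ηhatInv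
  have hε : IsIso εhat := by
    have (Y : M') : IsIso (εhat.app Y) := by
      have := BergerLemma.isIso_map_of_comp_eq hcomm.symm (adj.counit.app (Φ'.obj Y))
        (BergerLemma.isIso_map_counit_app adj _)
      rw [hεhat]
      exact IsIso.comp_isIso
    exact NatIso.isIso_of_isIso_app εhat
  refine ⟨inv ηhatInv, IsIso.inv_hom_id _, IsIso.hom_inv_id _, hε, fun X => ?_, fun Y => ?_⟩
  · have key : εhat.app ((Φ ⋙ Ψ').obj X) = (Φ ⋙ Ψ').map (ηhatInv.app X) := by
      rw [hεhat, hηhatInv]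
      exact (BergerLemma.map_comparison adj adj' X).symm
    rw [key]
    refine ((Φ ⋙ Ψ').map_comp _ _).symm.trans ?_
    rw [← NatTrans.comp_app, IsIso.inv_hom_id]
    exact (Φ ⋙ Ψ').map_id X
  · have key : (Φ' ⋙ Ψ).map (εhat.app Y) = ηhatInv.app ((Φ' ⋙ Ψ).obj Y) := by
      rw [hεhat, hηhatInv]
      exact BergerLemma.map_comparison adj' adj Y
    rw [key]
    refine (NatTrans.comp_app _ _ _).symm.trans ?_
    rw [IsIso.inv_hom_id]
    rfl
end

section
/- Let L : B → A with right adjoint R : A → B (unit η, counit ε), and L' : B' → A with right adjoint R' : A → B' (unit η', counit ε'). Let G : B → B' be a functor with G ∘ R = R', and set ζ₁₁ := (ε' L) ∘ (L' G η) : L' ∘ G ⟶ L. If the unit η is a natural isomorphism, then the functor R L' : B' → B is left adjoint to G, with unit η' : id_{B'} ⟶ G ∘ (R L') (using G R L' = R' L') and counit η⁻¹ ∘ (R ζ₁₁) : (R L') ∘ G ⟶ id_B; that is, these two natural transformations satisfy the triangle identities for an adjunction R L' ⊣ G. -/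
/-!
After replacing `R'` by `R ⋙ G`, all the transports become identities. Invertibility of `η`
enters twice. On objects `R a` the inverse of `η` is `R ε`, so the first triangle is the image
under `R` of `L'η' ≫ L'Gη ≫ ε' ≫ ε`, which is the identity by naturality of `ε'` and the triangle
identities of both adjunctions. For the second triangle, naturality of `η'` and the triangle
identity of `L' ⊣ R'` leave `Gη ≫ Gη⁻¹`.
-/

open CategoryTheory

/-- Given adjunctions `L ⊣ R` (between `B` and `A`) and `L' ⊣ R'` (between `B'` and `A`),
and a functor `G : B ⥤ B'` with `G ∘ R = R'`, if the unit `η` of `L ⊣ R` is invertible then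
`R ∘ L' : B' ⥤ B` is left adjoint to `G`, with unit `η'` and counit `η⁻¹ ∘ (R ζ₁₁)`, where
`ζ₁₁ = (ε' L) ∘ (L' G η) : L' ∘ G ⟶ L`: these satisfy the triangle identities. -/
theorem stmt2 {A B B' : Type*} [Category A] [Category B] [Category B']
    (L : B ⥤ A) (R : A ⥤ B) (adj : L ⊣ R)
    (L' : B' ⥤ A) (R' : A ⥤ B') (adj' : L' ⊣ R')
    (G : B ⥤ B') (h : R ⋙ G = R')
    [IsIso adj.unit]
    (ζ₁₁ : G ⋙ L' ⟶ L)
    (hζ : ∀ X : B, ζ₁₁.app X =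
      L'.map (G.map (adj.unit.app X)) ≫
        eqToHom (congrArg L'.obj (Functor.congr_obj h (L.obj X))) ≫
        adj'.counit.app (L.obj X))
    (u : 𝟭 B' ⟶ (L' ⋙ R) ⋙ G)
    (hu : ∀ Y : B', u.app Y =
      adj'.unit.app Y ≫ eqToHom (Functor.congr_obj h (L'.obj Y)).symm)
    (c : G ⋙ (L' ⋙ R) ⟶ 𝟭 B)
    (hc : ∀ X : B, c.app X = R.map (ζ₁₁.app X) ≫ (inv adj.unit).app X) :
    (∀ Y : B', (L' ⋙ R).map (u.app Y) ≫ c.app ((L' ⋙ R).obj Y) = 𝟙 ((L' ⋙ R).obj Y)) ∧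
    (∀ X : B, u.app (G.obj X) ≫ G.map (c.app X) = 𝟙 (G.obj X)) := by
  subst h
  have hη : ∀ X : B, adj.unit.app X ≫ (inv adj.unit).app X = 𝟙 X := fun X => by
    rw [← NatTrans.comp_app, IsIso.hom_inv_id]
    rfl
  -- `Rε` is a retraction of the invertible `ηR`, hence its inverse.
  have hε : ∀ a : A, (inv adj.unit).app (R.obj a) = R.map (adj.counit.app a) := fun a => by
    rw [← cancel_epi (adj.unit.app (R.obj a)), hη]
    exact (adj.right_triangle_components a).symm
  have hu' : ∀ Y : B', u.app Y = adj'.unit.app Y := fun Y => by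
    rw [hu]
    exact Category.comp_id _
  have hζ' : ∀ X : B, ζ₁₁.app X =
      L'.map (G.map (adj.unit.app X)) ≫ adj'.counit.app (L.obj X) := fun X => by
    rw [hζ]
    exact congrArg _ (Category.id_comp _)
  refine ⟨fun Y => ?_, fun X => ?_⟩
  -- Naturality of `ε'` at `ε` reduces the composite to `R` of a triangle identity of `L' ⊣ R'`.
  · have nat := adj'.counit.naturality (adj.counit.app (L'.obj Y))
    have tri := congrArg (fun f => L'.map (G.map f))
      (adj.right_triangle_components (L'.obj Y))
    have tri' := adj'.left_triangle_components Y
    dsimp at nat tri tri'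
    simp only [Functor.map_comp] at tri
    have key : L'.map (adj'.unit.app Y) ≫ ζ₁₁.app (R.obj (L'.obj Y)) ≫
        adj.counit.app (L'.obj Y) = 𝟙 (L'.obj Y) := by
      rw [hζ', Category.assoc]
      dsimp
      rw [← nat, reassoc_of% tri, G.map_id, L'.map_id, Category.id_comp]
      exact tri'
    rw [hc, hu']
    dsimp
    rw [hε, ← R.map_comp, ← R.map_comp]
    exact (congrArg R.map key).trans (R.map_id _)
  -- Naturality of `η'` at `Gη` moves `Gη` to the front, where it cancels `Gη⁻¹`.
  · have nat := adj'.unit.naturality (G.map (adj.unit.app X))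
    have tri' := adj'.right_triangle_components (L.obj X)
    have inv_id := congrArg G.map (hη X)
    dsimp at nat tri' inv_id
    rw [G.map_comp, G.map_id] at inv_id
    rw [hc, hu', hζ']
    dsimp
    simp only [Functor.map_comp, Category.assoc]
    rw [← reassoc_of% nat, reassoc_of% tri']
    exact inv_id
end

section
/- Let L : B → A with right adjoint R : A → B (unit η, counit ε), and L' : B' → A with right adjoint R' : A → B' (unit η', counit ε'). Let G : B → B' be a functor with G ∘ R = R', and set ζ₁₁ := (ε' L) ∘ (L' G η) : L' ∘ G ⟶ L. Assume that both units η and η' are natural isomorphisms and that G is conservative (reflects isomorphisms). Then: (1) the adjunction (R L' : B' → B) ⊣ G with unit η' and counit η⁻¹ ∘ (R ζ₁₁) is an adjoint equivalence of categories (i.e., its unit and counit are natural isomorphisms); and (2) ζ₁₁ : L' ∘ G ⟶ L is a natural isomorphism. -/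
/-!
Write `R' = G R`. Since `η'` is invertible, the triangle identity makes `R' ε'` invertible, hence
`G R ζ₁₁ = R' ζ₁₁` is invertible, and conservativity of `G` makes `R ζ₁₁`, hence `c`, invertible.

For `ζ₁₁` itself, naturality of `ε` gives `ε_{L'GX} ≫ ζ₁₁ X = L R ζ₁₁ X ≫ ε_{LX}`, which is
invertible; so it suffices that `ε_{L'GX}` is invertible. It is mono by this same identity, and
split epi because naturality of `ε'` gives
`ε'_{LRL'GX} ≫ ε_{L'GX} = L' R' ε_{L'GX} ≫ ε'_{L'GX}`, where both factors on the right are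
invertible by the triangle identities.
-/

open CategoryTheory

/-- If the unit is invertible, so is `R ε`. -/
theorem isIso_map_counit {A B : Type*} [Category A] [Category B]
    {L : B ⥤ A} {R : A ⥤ B} (adj : L ⊣ R) [IsIso adj.unit] (X : A) :
    IsIso (R.map (adj.counit.app X)) := by
  have h := adj.right_triangle_components X
  exact IsIso.of_isIso_fac_left h

/-- If the unit is invertible, so is `ε L`. -/
theorem isIso_counit_obj {A B : Type*} [Category A] [Category B]
    {L : B ⥤ A} {R : A ⥤ B} (adj : L ⊣ R) [IsIso adj.unit] (Y : B) :
    IsIso (adj.counit.app (L.obj Y)) := by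
  have h := adj.left_triangle_components Y
  exact IsIso.of_isIso_fac_left h

/-- Given adjunctions `L ⊣ R` (between `B` and `A`) and `L' ⊣ R'` (between `B'` and `A`),
and a conservative functor `G : B ⥤ B'` with `G ∘ R = R'`, if both units `η, η'` are
invertible then the adjunction `(R L' ⊣ G)` with unit `u = η'` and counit
`c = η⁻¹ ∘ (R ζ₁₁)` is an adjoint equivalence (its unit and counit are isomorphisms), and
`ζ₁₁ = (ε' L) ∘ (L' G η) : L' ∘ G ⟶ L` is a natural isomorphism. -/
theorem stmt3 {A B B' : Type*} [Category A] [Category B] [Category B']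
    (L : B ⥤ A) (R : A ⥤ B) (adj : L ⊣ R)
    (L' : B' ⥤ A) (R' : A ⥤ B') (adj' : L' ⊣ R')
    (G : B ⥤ B') (h : R ⋙ G = R')
    [IsIso adj.unit] [IsIso adj'.unit] [G.ReflectsIsomorphisms]
    (ζ₁₁ : G ⋙ L' ⟶ L)
    (hζ : ∀ X : B, ζ₁₁.app X =
      L'.map (G.map (adj.unit.app X)) ≫
        eqToHom (congrArg L'.obj (Functor.congr_obj h (L.obj X))) ≫
        adj'.counit.app (L.obj X))
    (u : 𝟭 B' ⟶ (L' ⋙ R) ⋙ G)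
    (hu : ∀ Y : B', u.app Y =
      adj'.unit.app Y ≫ eqToHom (Functor.congr_obj h (L'.obj Y)).symm)
    (c : G ⋙ (L' ⋙ R) ⟶ 𝟭 B)
    (hc : ∀ X : B, c.app X = R.map (ζ₁₁.app X) ≫ (inv adj.unit).app X) :
    IsIso u ∧ IsIso c ∧ IsIso ζ₁₁ := by
  subst h
  simp only [eqToHom_refl, Category.comp_id, Category.id_comp] at hζ hu
  have hRζ : ∀ X, IsIso (R.map (ζ₁₁.app X)) := fun X => by
    have : IsIso (G.map (R.map (ζ₁₁.app X))) := by
      have h1 : IsIso (G.map (R.map (adj'.counit.app (L.obj X)))) :=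
        isIso_map_counit adj' (L.obj X)
      rw [hζ, R.map_comp, G.map_comp]
      exact IsIso.comp_isIso
    exact isIso_of_reflects_iso _ G
  refine ⟨?_, ?_, ?_⟩
  · have : ∀ Y, IsIso (u.app Y) := fun Y => by
      rw [hu]
      exact inferInstanceAs (IsIso (adj'.unit.app Y))
    exact NatIso.isIso_of_isIso_app u
  · have : ∀ X, IsIso (c.app X) := fun X => by
      have := hRζ X
      rw [hc]
      exact IsIso.comp_isIso
    exact NatIso.isIso_of_isIso_app c
  · have : ∀ X, IsIso (ζ₁₁.app X) := fun X => by
      have := hRζ X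
      have h1 := isIso_counit_obj adj X
      have nat : adj.counit.app (L'.obj (G.obj X)) ≫ ζ₁₁.app X =
          L.map (R.map (ζ₁₁.app X)) ≫ adj.counit.app (L.obj X) :=
        (adj.counit.naturality (ζ₁₁.app X)).symm
      have hcomp : IsIso (adj.counit.app (L'.obj (G.obj X)) ≫ ζ₁₁.app X) := by
        rw [nat]
        exact IsIso.comp_isIso
      have hmono : Mono (adj.counit.app (L'.obj (G.obj X))) :=
        mono_of_mono _ (ζ₁₁.app X)
      have h2 := isIso_counit_obj adj' (G.obj X)
      have h3 := isIso_map_counit adj (L'.obj (G.obj X))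
      have nat' := adj'.counit.naturality (adj.counit.app (L'.obj (G.obj X)))
      have hcomp' : IsIso (adj'.counit.app _ ≫ adj.counit.app (L'.obj (G.obj X))) := by
        refine nat' ▸ ?_
        exact inferInstanceAs (IsIso (L'.map (G.map (R.map
          (adj.counit.app (L'.obj (G.obj X))))) ≫ adj'.counit.app (L'.obj (G.obj X))))
      have hsplit : IsSplitEpi (adj.counit.app (L'.obj (G.obj X))) :=
        IsSplitEpi.mk' ⟨inv (adj'.counit.app _ ≫ adj.counit.app (L'.obj (G.obj X))) ≫
          adj'.counit.app _, by rw [Category.assoc]; exact IsIso.inv_hom_id _⟩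
      have h4 : IsIso (adj.counit.app (L'.obj (G.obj X))) :=
        isIso_of_mono_of_isSplitEpi _
      exact IsIso.of_isIso_comp_left (adj.counit.app (L'.obj (G.obj X))) _
    exact NatIso.isIso_of_isIso_app ζ₁₁
end

section
/- Let A be a category in which every reflexive pair of morphisms admits a coequalizer. Then for any adjunction (L : B → A, R : A → B), the comparison functor K : A → B_{RL} from A to the Eilenberg–Moore category of the associated monad RL is a right adjoint (i.e., K admits a left adjoint). -/
open CategoryTheory Limits

/-!
For an algebra `(M, a)` of the monad `RL`, the pair `L a, ε_{LM} : L R L M ⟶ L M` is reflexive with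
common section `L η_M`, so it has a coequalizer `Q`. A morphism `Q ⟶ X` is a morphism `f : L M ⟶ X`
with `L a ≫ f = ε_{LM} ≫ f`. Under the bijection `A(L M, X) ≃ B(M, R X)` this equation says exactly
that the transpose of `f` is a morphism of algebras `(M, a) ⟶ K X`
(`coequalizes_iff_isAlgebraHom`). The resulting bijection `A(Q, X) ≃ Alg((M, a), K X)` is natural
in `X`, so `(M, a) ↦ Q` extends to a left adjoint of `K`.

Mathlib has this construction in its monadicity file, but only when the morphisms of both categories
live in the same universe, which is not assumed here.
-/

namespace ComparisonAdjoint

universe v₁ v₂ u₁ u₂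

variable {A : Type u₁} {B : Type u₂} [Category.{v₁} A] [Category.{v₂} B]
  {L : B ⥤ A} {R : A ⥤ B} (adj : L ⊣ R)

theorem hasCoequalizer [HasReflexiveCoequalizers A] (M : adj.toMonad.Algebra) :
    HasCoequalizer (L.map M.a) (adj.counit.app (L.obj M.A)) :=
  hasCoequalizer_of_common_section A (L.map (adj.unit.app M.A))
    ((L.map_comp _ _).symm.trans ((congrArg L.map M.unit).trans (L.map_id _)))
    (adj.left_triangle_components M.A)

/-- A morphism out of `L M` coequalizes the pair `L a, ε_{LM}` if and only if its transpose is a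
morphism of algebras into `K X`. -/
theorem coequalizes_iff_isAlgebraHom (M : adj.toMonad.Algebra) (X : A) (f : L.obj M.A ⟶ X) :
    L.map M.a ≫ f = adj.counit.app (L.obj M.A) ≫ f ↔
      R.map (L.map (adj.homEquiv _ _ f)) ≫ R.map (adj.counit.app X) =
        M.a ≫ adj.homEquiv _ _ f := by
  have h₁ : adj.homEquiv _ _ (L.map M.a ≫ f) = M.a ≫ adj.homEquiv _ _ f :=
    adj.homEquiv_naturality_left _ _
  have h₂ : adj.homEquiv _ _ (adj.counit.app (L.obj M.A) ≫ f) = R.map f := by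
    rw [adj.homEquiv_unit, R.map_comp]
    exact adj.right_triangle_components_assoc _ _
  have h₃ : R.map (L.map (adj.homEquiv _ _ f)) ≫ R.map (adj.counit.app X) = R.map f :=
    (R.map_comp _ _).symm.trans (congrArg R.map
      ((adj.homEquiv_counit _ _ _).symm.trans (Equiv.symm_apply_apply _ _)))
  rw [h₃, ← h₂]
  exact ((adj.homEquiv _ _).injective.eq_iff.symm.trans (by rw [← h₁]; rfl)).trans eq_comm

theorem symm_coequalizes (M : adj.toMonad.Algebra) (X : A) (g : M.A ⟶ R.obj X)
    (hg : R.map (L.map g) ≫ R.map (adj.counit.app X) = M.a ≫ g) :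
    L.map M.a ≫ (adj.homEquiv _ _).symm g =
      adj.counit.app (L.obj M.A) ≫ (adj.homEquiv _ _).symm g := by
  rw [coequalizes_iff_isAlgebraHom, Equiv.apply_symm_apply]
  exact hg

/-- The bijection between morphisms out of the coequalizer of `L a, ε_{LM}` and algebra morphisms
into `K X`, given by restricting to `L M` and transposing. -/
noncomputable def homEquiv (M : adj.toMonad.Algebra) (X : A)
    [HasCoequalizer (L.map M.a) (adj.counit.app (L.obj M.A))] :
    (coequalizer (L.map M.a) (adj.counit.app (L.obj M.A)) ⟶ X) ≃
      (M ⟶ (Monad.comparison adj).obj X) where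
  toFun f :=
    { f := adj.homEquiv _ _ (coequalizer.π (L.map M.a) (adj.counit.app (L.obj M.A)) ≫ f)
      h := (coequalizes_iff_isAlgebraHom adj M X _).1 (coequalizer.condition_assoc _ _ _) }
  invFun g := coequalizer.desc ((adj.homEquiv M.A X).symm g.f)
    (symm_coequalizes adj M X g.f g.h)
  left_inv f := by
    apply coequalizer.hom_ext
    exact (coequalizer.π_desc _ _).trans (Equiv.symm_apply_apply _ _)
  right_inv g := by
    apply Monad.Algebra.Hom.ext
    refine (congrArg (adj.homEquiv M.A X) (coequalizer.π_desc _ _)).trans ?_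
    exact Equiv.apply_symm_apply _ _

theorem homEquiv_naturality (M : adj.toMonad.Algebra) (X Y : A) (g : X ⟶ Y)
    [HasCoequalizer (L.map M.a) (adj.counit.app (L.obj M.A))]
    (f : coequalizer (L.map M.a) (adj.counit.app (L.obj M.A)) ⟶ X) :
    homEquiv adj M Y (f ≫ g) = homEquiv adj M X f ≫ (Monad.comparison adj).map g := by
  apply Monad.Algebra.Hom.ext
  refine (congrArg (adj.homEquiv M.A Y) (Category.assoc _ _ _).symm).trans ?_
  exact adj.homEquiv_naturality_right _ _

end ComparisonAdjoint

/-- If `A` has coequalizers of reflexive pairs then, for any adjunction `L ⊣ R` with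
`L : B ⥤ A`, the comparison functor `K : A ⥤ B_{RL}` into the Eilenberg–Moore category of
the associated monad `RL` is a right adjoint. -/
theorem stmt6 {A B : Type*} [Category A] [Category B] [HasReflexiveCoequalizers A]
    (L : B ⥤ A) (R : A ⥤ B) (adj : L ⊣ R) :
    (Monad.comparison adj).IsRightAdjoint := by
  have := ComparisonAdjoint.hasCoequalizer adj
  exact (Adjunction.adjunctionOfEquivLeft (G := Monad.comparison adj)
    (fun M X => ComparisonAdjoint.homEquiv adj M X)
    (fun M X Y g f => ComparisonAdjoint.homEquiv_naturality adj M X Y g f)).isRightAdjoint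
end

section
/- Let (L : B → A, R : A → B) be an adjunction with unit η and counit ε, let K : A → B₁ be the comparison functor into the Eilenberg–Moore category B₁ of the monad RL, with forgetful functor U : B₁ → B, and assume K has a left adjoint L₁ with unit η₁ and counit ε₁. Define π := (ε L₁) ∘ (L U η₁) : L ∘ U ⟶ L₁. Then for every RL-algebra (B, μ) in B₁: (1) the parallel pair Lμ, ε_{LB} : LRLB → LB is a reflexive pair (Lη_B is a common section); and (2) the morphism π_{(B,μ)} : LB → L₁(B, μ) is a coequalizer of Lμ and ε_{LB} in A. -/
open CategoryTheory Limits

/-!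
A morphism `g : LB ⟶ X` coequalizes `Lμ` and `ε_{LB}` exactly when its transpose
`η_B ≫ R g : B ⟶ RX` is a morphism of algebras `(B, μ) ⟶ K X`
(`coequalizes_of_hom` and `homOfCoequalizes`). Through `L₁ ⊣ K`, such algebra morphisms correspond
to morphisms `h : L₁(B, μ) ⟶ X`, and by naturality of `ε` the composite correspondence is
`h ↦ π_{(B,μ)} ≫ h` (`pi_comp`). This is the universal property of the coequalizer.
-/

namespace ComparisonCoequalizer

variable {A B : Type*} [Category A] [Category B] {L : B ⥤ A} {R : A ⥤ B} (adj : L ⊣ R)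

theorem coequalizes_of_hom {P : B} {X : A} (μ : R.obj (L.obj P) ⟶ P) (f : P ⟶ R.obj X)
    (h : R.map (L.map f) ≫ R.map (adj.counit.app X) = μ ≫ f) :
    L.map μ ≫ L.map f ≫ adj.counit.app X =
      adj.counit.app (L.obj P) ≫ L.map f ≫ adj.counit.app X := by
  rw [← L.map_comp_assoc, ← h]
  simp

/-- The compatibility square making the transpose of a coequalizing morphism a morphism of
algebras: both of its sides are equal to `R g`. -/
theorem hom_of_coequalizes {P : B} {X : A} (μ : R.obj (L.obj P) ⟶ P) (g : L.obj P ⟶ X)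
    (hg : L.map μ ≫ g = adj.counit.app (L.obj P) ≫ g) :
    R.map (L.map (adj.unit.app P ≫ R.map g)) ≫ R.map (adj.counit.app X) =
      μ ≫ adj.unit.app P ≫ R.map g := by
  have h1 : R.map (L.map (adj.unit.app P ≫ R.map g)) ≫ R.map (adj.counit.app X) = R.map g := by
    rw [← R.map_comp]
    simp
  have h2 : μ ≫ adj.unit.app P ≫ R.map g = R.map g := by
    rw [← adj.unit_naturality_assoc, ← R.map_comp, hg]
    simp
  exact h1.trans h2.symm

/-- The transpose of a morphism coequalizing `Lμ` and `ε_{LB}`, as a morphism of algebras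
`(B, μ) ⟶ K X`. -/
def homOfCoequalizes (b : adj.toMonad.Algebra) {X : A} (g : L.obj b.A ⟶ X)
    (hg : L.map b.a ≫ g = adj.counit.app (L.obj b.A) ≫ g) :
    b ⟶ (Monad.comparison adj).obj X where
  f := adj.unit.app b.A ≫ R.map g
  h := hom_of_coequalizes adj b.a g hg

theorem transpose_comp {P : B} {X Y : A} (u : P ⟶ R.obj Y) (h : Y ⟶ X) :
    (L.map u ≫ adj.counit.app Y) ≫ h = (adj.homEquiv P X).symm (u ≫ R.map h) := by
  rw [adj.homEquiv_counit]
  simp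

theorem pi_comp {L₁ : adj.toMonad.Algebra ⥤ A} (adj₁ : L₁ ⊣ Monad.comparison adj)
    (b : adj.toMonad.Algebra) {X : A} (h : L₁.obj b ⟶ X) :
    (L.map (adj₁.unit.app b).f ≫ adj.counit.app (L₁.obj b)) ≫ h =
      (adj.homEquiv b.A X).symm ((adj₁.homEquiv b X h).f) := by
  have h1 : (adj₁.homEquiv b X h).f = (adj₁.unit.app b).f ≫ R.map h := by
    rw [adj₁.homEquiv_unit]; rfl
  rw [h1]
  exact transpose_comp adj _ h

end ComparisonCoequalizer

/-- For an adjunction `L ⊣ R` with comparison functor `K` into the Eilenberg–Moore category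
of the monad `RL`, forgetful functor `U`, a left adjoint `L₁ ⊣ K` with unit `η₁` and counit
`ε₁`, and `π := (ε L₁) ∘ (L U η₁) : L ∘ U ⟶ L₁`: for every algebra `(B, μ)`, the pair
`(Lμ, ε_{LB})` is reflexive (with common section `Lη_B`) and `π_{(B,μ)}` is a coequalizer
of `Lμ` and `ε_{LB}`. -/
theorem stmt8 {A B : Type*} [Category A] [Category B]
    (L : B ⥤ A) (R : A ⥤ B) (adj : L ⊣ R)
    (L₁ : adj.toMonad.Algebra ⥤ A) (adj₁ : L₁ ⊣ Monad.comparison adj)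
    (π : adj.toMonad.forget ⋙ L ⟶ L₁)
    (hπ : ∀ b : adj.toMonad.Algebra, π.app b =
      L.map (adj.toMonad.forget.map (adj₁.unit.app b)) ≫ adj.counit.app (L₁.obj b)) :
    ∀ b : adj.toMonad.Algebra,
      (L.map (adj.unit.app b.A) ≫ L.map b.a = 𝟙 (L.obj b.A)) ∧
      (L.map (adj.unit.app b.A) ≫ adj.counit.app (L.obj b.A) = 𝟙 (L.obj b.A)) ∧
      IsReflexivePair (L.map b.a) (adj.counit.app (L.obj b.A)) ∧
      ∃ w : L.map b.a ≫ π.app b = adj.counit.app (L.obj b.A) ≫ π.app b,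
        Nonempty (IsColimit (Cofork.ofπ (π.app b) w)) := by
  intro b
  have h1 : L.map (adj.unit.app b.A) ≫ L.map b.a = 𝟙 (L.obj b.A) := by
    have h : adj.unit.app b.A ≫ b.a = 𝟙 b.A := b.unit
    rw [← L.map_id, ← h]
    exact (L.map_comp _ _).symm
  have h2 := adj.left_triangle_components b.A
  refine ⟨h1, h2, ⟨_, h1, h2⟩, ?_⟩
  have key : ∀ {X : A} (h : L₁.obj b ⟶ X),
      π.app b ≫ h = (adj.homEquiv b.A X).symm ((adj₁.homEquiv b X h).f) := by
    intro X h
    rw [hπ]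
    exact ComparisonCoequalizer.pi_comp adj adj₁ b h
  have w : L.map b.a ≫ π.app b = adj.counit.app (L.obj b.A) ≫ π.app b := by
    rw [hπ]
    exact ComparisonCoequalizer.coequalizes_of_hom adj b.a _ (adj₁.unit.app b).h
  refine ⟨w, ⟨Cofork.IsColimit.mk _
    (fun s => (adj₁.homEquiv b s.pt).symm
      (ComparisonCoequalizer.homOfCoequalizes adj b s.π s.condition)) ?_ ?_⟩⟩
  · intro s
    refine (key _).trans ?_
    rw [Equiv.apply_symm_apply]
    exact (Equiv.symm_apply_eq _).2 (adj.homEquiv_unit (X := b.A) (f := s.π)).symm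
  · intro s m hm
    rw [Equiv.eq_symm_apply]
    apply Monad.Algebra.Hom.ext
    have h3 := (key m).symm.trans hm
    exact ((Equiv.symm_apply_eq _).1 h3).trans (adj.homEquiv_unit (X := b.A) (f := s.π))
end

section
/- Let R be a commutative ring, A an associative unital R-algebra, and p a prime number such that A has characteristic p. For x ∈ A, let ad(x) denote the R-linear endomorphism of A given by ad(x)(y) = xy − yx (i.e., ad(x) = mulLeft(x) − mulRight(x) in the endomorphism algebra of A). Then for every x ∈ A, the p-th power of ad(x) in the composition algebra of R-linear endomorphisms of A equals ad(x^p): (ad x)^p = ad(x^p). -/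
/-- Jacobson's identity: for an associative unital algebra `A` of prime characteristic `p`
over a commutative ring `R`, writing `ad x = mulLeft x - mulRight x` for the commutator
endomorphism, one has `(ad x)^p = ad (x^p)`. -/
theorem stmt12 {R A : Type*} [CommRing R] [Ring A] [Algebra R A]
    (p : ℕ) [Fact p.Prime] [CharP A p] (x : A) :
    (LinearMap.mulLeft R x - LinearMap.mulRight R x) ^ p
      = LinearMap.mulLeft R (x ^ p) - LinearMap.mulRight R (x ^ p) := by
  -- `End R A` has characteristic `p`: the left regular representation `A → End R A` is injective.
  have : CharP (Module.End R A) p :=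
    charP_of_injective_ringHom (f := (Algebra.lmul R A).toRingHom) Algebra.lmul_injective p
  -- Left and right multiplications commute by associativity, so the Frobenius identity applies.
  rw [sub_pow_char_of_commute p (LinearMap.commute_mulLeft_right (R := R) x x),
    LinearMap.pow_mulLeft, LinearMap.pow_mulRight]
end
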